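/- arXiv:1508.00633 — 4 statements merged into one kernel-verified Lean document; each statement's English description precedes it below -/
import Mathlib

section
/- Let U ⊆ ℝ³ be open, x ∈ U, let n : U → ℝ³ be continuously differentiable with |n(y)| = 1 for all y ∈ U, and let u : U → ℝ³ be differentiable at x. Let τ ∈ ℝ³ satisfy τ · n(x) = 0, and suppose that the directional derivative at x of the scalar function y ↦ u(y)·n(y) in the direction τ vanishes (as happens when u·n vanishes identically on the level surface through x whose unit normal field is n). Then, writing S = Du(x) + Du(x)ᵀ for the stress tensor at x, one has (S n(x)) · τ = ((curl u)(x) × n(x)) · τ − 2 (Dn(x)τ) · u(x), where Du(x) and Dn(x) denote the Jacobian matrices (total derivatives) of u and n at x. -/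
/-!
Write `A = Du(x)`. Since `curl u × w = (A - Aᵀ) w`, one has `S n = curl u × n + 2 Aᵀ n`, so the
claim reduces to `(Aᵀ n) · τ = -(Dn τ) · u`. The left-hand side is `n · (A τ)`, and the product rule
for `u · n` along `τ` gives `n · (A τ) + u · (Dn τ) = 0`.
-/


open Set

noncomputable section

/-- Points of ℝ³. -/
abbrev V3 := Fin 3 → ℝ

/-- Euclidean dot product on ℝ³. -/
def dot3 (a b : V3) : ℝ := ∑ i : Fin 3, a i * b i

/-- Cross product in ℝ³. -/
def cross (a b : V3) : V3 :=
  ![a 1 * b 2 - a 2 * b 1, a 2 * b 0 - a 0 * b 2, a 0 * b 1 - a 1 * b 0]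

/-- Partial derivative in the `i`-th coordinate direction. -/
def pd (i : Fin 3) (f : V3 → ℝ) : V3 → ℝ :=
  fun x => fderiv ℝ f x (Pi.single i 1)

/-- The Jacobian of `u` at `x` applied to `w`: `(Du(x)) w`, the directional
derivative of `u` along `w`. -/
def jac (u : V3 → V3) (x w : V3) : V3 :=
  fun j => fderiv ℝ (fun y => u y j) x w

/-- The transpose Jacobian of `u` at `x` applied to `w`: `(Du(x)ᵀ) w`. -/
def jacT (u : V3 → V3) (x w : V3) : V3 :=
  fun j => ∑ k : Fin 3, fderiv ℝ (fun y => u y k) x (Pi.single j 1) * w k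

/-- Curl of a vector field on ℝ³ at a point. -/
def curl3 (u : V3 → V3) : V3 → V3 :=
  fun x => ![pd 1 (fun y => u y 2) x - pd 2 (fun y => u y 1) x,
             pd 2 (fun y => u y 0) x - pd 0 (fun y => u y 2) x,
             pd 0 (fun y => u y 1) x - pd 1 (fun y => u y 0) x]

end

/-- A linear functional on ℝ³ in coordinates. -/
lemma clm_apply_eq (f : V3 →L[ℝ] ℝ) (w : V3) :
    f w = w 0 * f (Pi.single 0 1) + w 1 * f (Pi.single 1 1) + w 2 * f (Pi.single 2 1) := by
  conv_lhs => rw [pi_eq_sum_univ' w]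
  simp [Fin.sum_univ_three]

lemma fderiv_dot3 {u n : V3 → V3} {x : V3} (hu : DifferentiableAt ℝ u x)
    (hn : DifferentiableAt ℝ n x) (τ : V3) :
    fderiv ℝ (fun y => dot3 (u y) (n y)) x τ
      = dot3 (jac u x τ) (n x) + dot3 (jac n x τ) (u x) := by
  have hu' := differentiableAt_pi.1 hu
  have hn' := differentiableAt_pi.1 hn
  have h := HasFDerivAt.fun_sum (u := Finset.univ) fun i _ =>
    (hu' i).hasFDerivAt.mul (hn' i).hasFDerivAt
  have h2 : fderiv ℝ (fun y => dot3 (u y) (n y)) x = _ := h.fderiv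
  rw [h2]
  simp [dot3, jac, Fin.sum_univ_three]
  ring

/-- The identity `S w = curl u × w + 2 Du(x)ᵀ w`. -/
lemma jac_add_jacT (u : V3 → V3) (x w : V3) :
    jac u x w + jacT u x w = cross (curl3 u x) w + (2 : ℝ) • jacT u x w := by
  ext j
  fin_cases j <;>
    simp [jac, jacT, cross, curl3, pd, Fin.sum_univ_three, clm_apply_eq _ w] <;> ring

/-- `Du(x)ᵀ` is the adjoint of `Du(x)` for the dot product. -/
lemma dot3_jacT (u : V3 → V3) (x w τ : V3) :
    dot3 (jacT u x w) τ = dot3 (jac u x τ) w := by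
  simp only [dot3, jac, jacT, Fin.sum_univ_three, clm_apply_eq _ τ]
  ring

/-- Let `U ⊆ ℝ³` be open, `x ∈ U`, let `n : U → ℝ³` be `C¹` on `U`
with `|n| ≡ 1` on `U`, and let `u` be differentiable at `x`.  If `τ · n(x) = 0` and
the directional derivative of `y ↦ u(y)·n(y)` at `x` along `τ` vanishes, then for
the stress tensor `S = Du(x) + Du(x)ᵀ` one has
`(S n(x)) · τ = ((curl u)(x) × n(x)) · τ − 2 (Dn(x) τ) · u(x)`. -/
theorem navier_stress_identity_general
    (U : Set V3) (hU : IsOpen U) (x : V3) (hx : x ∈ U)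
    (n u : V3 → V3)
    (hn : ContDiffOn ℝ 1 n U)
    (hunit : ∀ y ∈ U, dot3 (n y) (n y) = 1)
    (hu : DifferentiableAt ℝ u x)
    (τ : V3) (hτ : dot3 τ (n x) = 0)
    (hdir : fderiv ℝ (fun y => dot3 (u y) (n y)) x τ = 0) :
    dot3 (jac u x (n x) + jacT u x (n x)) τ
      = dot3 (cross (curl3 u x) (n x)) τ - 2 * dot3 (jac n x τ) (u x) := by
  have hnx : DifferentiableAt ℝ n x :=
    (hn.contDiffAt (hU.mem_nhds hx)).differentiableAt one_ne_zero
  rw [fderiv_dot3 hu hnx, ← dot3_jacT] at hdir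
  rw [jac_add_jacT]
  have h : dot3 (cross (curl3 u x) (n x) + (2 : ℝ) • jacT u x (n x)) τ
      = dot3 (cross (curl3 u x) (n x)) τ + 2 * dot3 (jacT u x (n x)) τ := by
    simp only [dot3, Fin.sum_univ_three, Pi.add_apply, Pi.smul_apply, smul_eq_mul]
    ring
  rw [h]
  linarith
end

section
/- Let r > 0 and let u : ℝ³ → ℝ³ be continuously differentiable on a neighborhood of the sphere {y ∈ ℝ³ : |y| = r}, and suppose u(y) · y = 0 for every y with |y| = r (zero-flux condition). Then for every x with |x| = r and every τ ∈ ℝ³ with τ · x = 0, setting n = x/r, the stress tensor S = Du(x) + Du(x)ᵀ satisfies (S n) · τ = (Du(x) n) · τ − (u(x) · τ)/r. (This is the identity [S n]_tan = ∂u_h/∂r − u_h/r on the sphere of radius r with outward unit normal n.) -/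
/-!
Differentiate the zero-flux condition along the sphere. For a tangent vector `τ` at `x`, the
rational curve `γ` of `sphereCurve` stays on the sphere of radius `r` and satisfies `γ 0 = x`,
`γ' 0 = τ` (`dot3_sphereCurve`, `hasDerivAt_sphereCurve`). Hence `u (γ t) · γ t = 0` for all `t`,
and its derivative at `t = 0` gives `(Du(x) τ) · x + u(x) · τ = 0`. By the transpose identity
`dot3_jacT`, `(Du(x)ᵀ n) · τ = (Du(x) τ) · n`, which is therefore `-(u(x) · τ) / r`; adding
`(Du(x) n) · τ` gives the claim.
-/

open Set

/-- The curve `((1 - s) x + t τ) / (1 + s)` with `s = t² |τ|² / (4 r²)`. It is the stereographic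
parametrization of the great circle through `x` in the direction `τ`; unlike the
parametrization by angle it needs no normalization of `τ`, so `τ = 0` is not a special case. -/
noncomputable def sphereCurve (r : ℝ) (x τ : V3) (t : ℝ) : V3 :=
  fun i => ((1 - t ^ 2 * (dot3 τ τ / (4 * r ^ 2))) * x i + t * τ i) /
    (1 + t ^ 2 * (dot3 τ τ / (4 * r ^ 2)))

lemma dot3_self_nonneg (a : V3) : 0 ≤ dot3 a a :=
  Finset.sum_nonneg fun i _ => mul_self_nonneg (a i)

lemma dot3_sphereCurve {r : ℝ} (hr : 0 < r) {x τ : V3} (hx : dot3 x x = r ^ 2)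
    (hτ : dot3 τ x = 0) (t : ℝ) :
    dot3 (sphereCurve r x τ t) (sphereCurve r x τ t) = r ^ 2 := by
  have hc : 0 ≤ dot3 τ τ / (4 * r ^ 2) := div_nonneg (dot3_self_nonneg τ) (by positivity)
  have hT : dot3 τ τ = 4 * r ^ 2 * (dot3 τ τ / (4 * r ^ 2)) := by field_simp
  unfold sphereCurve
  generalize dot3 τ τ / (4 * r ^ 2) = c at hc hT ⊢
  have hd : 1 + t ^ 2 * c ≠ 0 := by positivity
  simp only [dot3, Fin.sum_univ_three] at hx hτ hT ⊢
  field_simp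
  linear_combination (1 - t ^ 2 * c) ^ 2 * hx + t ^ 2 * hT + 2 * t * (1 - t ^ 2 * c) * hτ

lemma sphereCurve_zero (r : ℝ) (x τ : V3) : sphereCurve r x τ 0 = x := by
  ext i
  simp [sphereCurve]

lemma hasDerivAt_sphereCurve (r : ℝ) (x τ : V3) :
    HasDerivAt (sphereCurve r x τ) τ 0 := by
  rw [hasDerivAt_pi]
  intro i
  unfold sphereCurve
  generalize dot3 τ τ / (4 * r ^ 2) = c
  have hs : HasDerivAt (fun t : ℝ => t ^ 2 * c) 0 0 := by
    simpa using ((hasDerivAt_id (0 : ℝ)).pow 2).mul_const c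
  have h := (((hs.const_sub 1).mul_const (x i)).add
    ((hasDerivAt_id (0 : ℝ)).mul_const (τ i))).div (hs.const_add 1) (by simp)
  exact h.congr_deriv (by simp)

/-- The derivative of the zero-flux condition in a tangent direction:
`(Du(x) τ) · x + u(x) · τ = 0`. -/
lemma dot3_jac_add_dot3_eq_zero {r : ℝ} (hr : 0 < r) {u : V3 → V3} {x τ : V3}
    (hu : DifferentiableAt ℝ u x)
    (hflux : ∀ y : V3, dot3 y y = r ^ 2 → dot3 (u y) y = 0)
    (hx : dot3 x x = r ^ 2) (hτ : dot3 τ x = 0) :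
    dot3 (jac u x τ) x + dot3 (u x) τ = 0 := by
  have hγ := hasDerivAt_sphereCurve r x τ
  have hγ0 := sphereCurve_zero r x τ
  have hcomp (j : Fin 3) :
      HasDerivAt (fun t => u (sphereCurve r x τ t) j) (jac u x τ j) 0 := by
    have hj : HasFDerivAt (fun y => u y j) (fderiv ℝ (fun y => u y j) x)
        (sphereCurve r x τ 0) := by
      rw [hγ0]
      exact (differentiableAt_pi.1 hu j).hasFDerivAt
    exact hj.comp_hasDerivAt 0 hγ
  have hsum : HasDerivAt
      (fun t => dot3 (u (sphereCurve r x τ t)) (sphereCurve r x τ t))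
      (∑ j : Fin 3, (jac u x τ j * x j + u x j * τ j)) 0 := by
    have h := HasDerivAt.fun_sum (u := Finset.univ) fun (j : Fin 3) _ =>
      (hcomp j).fun_mul (hasDerivAt_pi.1 hγ j)
    simpa only [hγ0, dot3] using h
  have hzero : (fun t => dot3 (u (sphereCurve r x τ t)) (sphereCurve r x τ t)) = fun _ => 0 :=
    funext fun t => hflux _ (dot3_sphereCurve hr hx hτ t)
  rw [hzero] at hsum
  rw [dot3, dot3, ← Finset.sum_add_distrib]
  exact hsum.unique (hasDerivAt_const 0 0)

/-- Let `r > 0` and let `u : ℝ³ → ℝ³` be `C¹` on a neighborhood of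
the sphere `{|y| = r}` with `u(y)·y = 0` there.  Then for every `x` with `|x| = r`
and every tangent vector `τ` (`τ · x = 0`), with `n = x/r`, the stress tensor
`S = Du(x) + Du(x)ᵀ` satisfies `(S n) · τ = (Du(x) n) · τ − (u(x) · τ)/r`. -/
theorem navier_stress_identity_sphere_radial
    (r : ℝ) (hr : 0 < r) (u : V3 → V3)
    (V : Set V3) (hV : IsOpen V) (hsub : {y : V3 | dot3 y y = r ^ 2} ⊆ V)
    (hu : ContDiffOn ℝ 1 u V)
    (hflux : ∀ y : V3, dot3 y y = r ^ 2 → dot3 (u y) y = 0) :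
    ∀ x : V3, dot3 x x = r ^ 2 → ∀ τ : V3, dot3 τ x = 0 →
      dot3 (jac u x (r⁻¹ • x) + jacT u x (r⁻¹ • x)) τ
        = dot3 (jac u x (r⁻¹ • x)) τ - dot3 (u x) τ / r := by
  intro x hx τ hτ
  have hux : DifferentiableAt ℝ u x :=
    (hu.differentiableOn one_ne_zero).differentiableAt (hV.mem_nhds (hsub hx))
  have hkey := dot3_jac_add_dot3_eq_zero hr hux hflux hx hτ
  have hadd (a b : V3) : dot3 (a + b) τ = dot3 a τ + dot3 b τ := by
    simp [dot3, add_mul, Finset.sum_add_distrib]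
  have hsmul (a : V3) : dot3 a (r⁻¹ • x) = r⁻¹ * dot3 a x := by
    simp only [dot3, Pi.smul_apply, smul_eq_mul, Finset.mul_sum]
    exact Finset.sum_congr rfl fun i _ => by ring
  rw [hadd, dot3_jacT, hsmul]
  linear_combination r⁻¹ * hkey
end

section
/- Let r > 0 and let u : ℝ³ → ℝ³ be continuously differentiable on a neighborhood of the sphere {y ∈ ℝ³ : |y| = r}, and suppose u(y) · y = 0 for every y with |y| = r (zero-flux condition). Then for every x with |x| = r and every τ ∈ ℝ³ with τ · x = 0, setting n = x/r, the stress tensor S = Du(x) + Du(x)ᵀ satisfies (S n) · τ = ((curl u)(x) × n) · τ − 2 (u(x) · τ)/r. (This is the identity [S n]_tan = (curl u) × n − 2 u_h/r on the sphere of radius r with outward unit normal n.) -/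
/-!
The vector identity `(curl u) × n = (Du - Duᵀ) n` turns the claim into
`2 (Duᵀ n) · τ = -2 (u · τ) / r`, that is, `Du(x) τ · x + u(x) · τ = 0`.  The latter
(`flux_deriv`) is the derivative at `0` of `u(γ t) · γ t = 0` along a curve `γ` on the sphere that
starts at `x` with velocity `τ`.
-/

open Set

/-- The derivative of the zero-flux condition `u(y) · y = 0` along a tangent vector `τ`. -/
lemma flux_deriv (r : ℝ) (hr : 0 < r) (u : V3 → V3) (x τ : V3)
    (hd : ∀ j, DifferentiableAt ℝ (fun y => u y j) x)
    (hflux : ∀ y : V3, dot3 y y = r ^ 2 → dot3 (u y) y = 0)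
    (hx : dot3 x x = r ^ 2) (hτ : dot3 τ x = 0) :
    dot3 (jac u x τ) x + dot3 (u x) τ = 0 := by
  -- With `a = |τ|² / (4 r²)`, the rational curve `((1 - a t²) x + t τ) / (1 + a t²)` stays on the
  -- sphere; unlike a trigonometric parametrization it needs no separate case `τ = 0`.
  obtain ⟨a, ha0, ha⟩ : ∃ a : ℝ, 0 ≤ a ∧ dot3 τ τ = 4 * a * r ^ 2 := by
    refine ⟨dot3 τ τ / (4 * r ^ 2), ?_, by field_simp⟩
    have : 0 ≤ dot3 τ τ := Finset.sum_nonneg fun i _ => mul_self_nonneg _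
    positivity
  have hpos : ∀ t : ℝ, 1 + a * t ^ 2 ≠ 0 := fun t => by positivity
  let γ : ℝ → V3 := fun t j => ((1 - a * t ^ 2) * x j + t * τ j) / (1 + a * t ^ 2)
  have hγ0 : γ 0 = x := by ext j; simp [γ]
  have hγj : ∀ j, HasDerivAt (fun t => γ t j) (τ j) 0 := by
    intro j
    have hsq : HasDerivAt (fun t : ℝ => a * t ^ 2) 0 0 := by
      simpa using ((hasDerivAt_id (0 : ℝ)).pow 2).const_mul a
    have h := (((hsq.const_sub 1).mul_const (x j)).add
      ((hasDerivAt_id (0 : ℝ)).mul_const (τ j))).div (hsq.const_add 1) (hpos 0)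
    refine h.congr_deriv ?_
    simp
  have hγ : HasDerivAt γ τ 0 := hasDerivAt_pi.2 hγj
  have hsphere : ∀ t, dot3 (γ t) (γ t) = r ^ 2 := by
    intro t
    have ht := hpos t
    simp only [dot3, Fin.sum_univ_three, γ] at hx hτ ha ⊢
    field_simp
    linear_combination (1 - a * t ^ 2) ^ 2 * hx + 2 * (1 - a * t ^ 2) * t * hτ + t ^ 2 * ha
  have huj : ∀ j, HasDerivAt (fun t => u (γ t) j) (jac u x τ j) 0 := by
    intro j
    have h : HasFDerivAt (fun y => u y j) (fderiv ℝ (fun y => u y j) x) (γ 0) := by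
      rw [hγ0]; exact (hd j).hasFDerivAt
    exact h.comp_hasDerivAt (0 : ℝ) hγ
  have hsum : HasDerivAt (fun t => dot3 (u (γ t)) (γ t))
      (∑ j, (jac u x τ j * γ 0 j + u (γ 0) j * τ j)) 0 :=
    HasDerivAt.fun_sum fun j _ => (huj j).mul (hγj j)
  have hzero : (fun t => dot3 (u (γ t)) (γ t)) = fun _ => (0 : ℝ) :=
    funext fun t => hflux _ (hsphere t)
  rw [hzero, hγ0, Finset.sum_add_distrib] at hsum
  exact hsum.unique (hasDerivAt_const _ _)

lemma fderiv_eq_sum_pd (f : V3 → ℝ) (x w : V3) :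
    fderiv ℝ f x w = w 0 * pd 0 f x + w 1 * pd 1 f x + w 2 * pd 2 f x := by
  have h := (fderiv ℝ f x).toLinearMap.pi_apply_eq_sum_univ w
  have e : ∀ i : Fin 3, (fun j => if i = j then (1 : ℝ) else 0) = Pi.single i 1 := by
    intro i; ext j; simp [Pi.single_apply, eq_comm]
  simp only [Fin.sum_univ_three, e, smul_eq_mul] at h
  exact h

/-- Let `r > 0` and let `u : ℝ³ → ℝ³` be `C¹` on a neighborhood of
the sphere `{|y| = r}` with `u(y)·y = 0` there.  Then for every `x` with `|x| = r`
and every tangent vector `τ` (`τ · x = 0`), with `n = x/r`, the stress tensor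
`S = Du(x) + Du(x)ᵀ` satisfies `(S n) · τ = ((curl u)(x) × n) · τ − 2 (u(x) · τ)/r`. -/
theorem navier_stress_identity_sphere_curl
    (r : ℝ) (hr : 0 < r) (u : V3 → V3)
    (V : Set V3) (hV : IsOpen V) (hsub : {y : V3 | dot3 y y = r ^ 2} ⊆ V)
    (hu : ContDiffOn ℝ 1 u V)
    (hflux : ∀ y : V3, dot3 y y = r ^ 2 → dot3 (u y) y = 0) :
    ∀ x : V3, dot3 x x = r ^ 2 → ∀ τ : V3, dot3 τ x = 0 →
      dot3 (jac u x (r⁻¹ • x) + jacT u x (r⁻¹ • x)) τ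
        = dot3 (cross (curl3 u x) (r⁻¹ • x)) τ - 2 * (dot3 (u x) τ) / r := by
  intro x hx τ hτ
  have hux : DifferentiableAt ℝ u x :=
    (hu.contDiffAt (hV.mem_nhds (hsub hx))).differentiableAt one_ne_zero
  have key := flux_deriv r hr u x τ (differentiableAt_pi.1 hux) hflux hx hτ
  have hT : ∀ j w, jacT u x w j = ∑ k, pd j (fun y => u y k) x * w k := fun _ _ => rfl
  simp only [dot3, cross, curl3, jac, hT, Pi.add_apply, Pi.smul_apply, smul_eq_mul,
    fderiv_eq_sum_pd, Fin.sum_univ_three, Matrix.cons_val] at key ⊢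
  field_simp
  linear_combination 2 * key
end

section
/- Let m ≥ 0 be an integer. There exists a constant C depending only on m such that for every smooth function g : ℝ³ → ℝ all of whose partial derivatives of order ≤ m+1 are square-integrable on ℝ³, and for every z ∈ ℝ, (∑_{α+β≤m} ∫_{ℝ²} |∂_x^α ∂_y^β g(x,y,z)|² dx dy)^{1/2} ≤ C · ‖g‖_{H^m(ℝ³)}^{1/2} · ‖∂_z g‖_{H^m(ℝ³)}^{1/2}. In other words, the mixed norm ‖g‖_{L^∞_z(H^m_{xy}(ℝ²))} is controlled by the geometric mean of ‖g‖_{H^m(ℝ³)} and ‖∂_z g‖_{H^m(ℝ³)}. -/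
/-!
Let `h = ∂_x^α ∂_y^β g` with `α + β ≤ m`. On almost every vertical line both `h²` and
`∂_z(h²) = 2 h ∂_z h` are integrable, so `h² → 0` at `-∞` and
`h(x,y,z)² ≤ 2 ∫ |h ∂_z h|(x,y,t) dt` (`sq_le_integral_abs_deriv`). Integrating in `(x,y)` and using
Fubini and Cauchy–Schwarz gives
`∫ h(x,y,z)² dx dy ≤ 2 ‖h‖_{L²} ‖∂_z h‖_{L²}` (`slice_integral_le`).
As smooth partial derivatives commute (`pd_two_horizontal`), `∂_z h = ∂_x^α ∂_y^β ∂_z g`; summing over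
`(α, β)` with the discrete Cauchy–Schwarz inequality bounds the squared slice norm by
`2 ‖g‖_{H^m} ‖∂_z g‖_{H^m}`, so `C = √2` works.
-/

open MeasureTheory Set

noncomputable section

/-- Iterated partial derivative for a multi-index `γ = (γ₁, γ₂, γ₃)`. -/
def pdM (γ : ℕ × ℕ × ℕ) (f : V3 → ℝ) : V3 → ℝ :=
  (pd 0)^[γ.1] ((pd 1)^[γ.2.1] ((pd 2)^[γ.2.2] f))

/-- Multi-indices in ℕ³ of total degree at most `m`. -/
def midx (m : ℕ) : Finset (ℕ × ℕ × ℕ) :=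
  (Finset.range (m + 1) ×ˢ Finset.range (m + 1) ×ˢ Finset.range (m + 1)).filter
    (fun γ => γ.1 + γ.2.1 + γ.2.2 ≤ m)

/-- Square of the `H^m(ℝ³)` norm of a scalar function. -/
def HnormSq (m : ℕ) (f : V3 → ℝ) : ℝ :=
  ∑ γ ∈ midx m, ∫ x : V3, (pdM γ f x) ^ 2

/-- The `H^m(ℝ³)` norm of a scalar function. -/
def Hnorm (m : ℕ) (f : V3 → ℝ) : ℝ :=
  Real.sqrt (HnormSq m f)

/-- Horizontal multi-indices `(α, β)` with `α + β ≤ m`. -/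
def midx2 (m : ℕ) : Finset (ℕ × ℕ) :=
  (Finset.range (m + 1) ×ˢ Finset.range (m + 1)).filter (fun γ => γ.1 + γ.2 ≤ m)

/-- Square of the horizontal slice norm `‖g(·,·,z)‖_{H^m(ℝ²)}²`:
`∑_{α+β≤m} ∫_{ℝ²} |∂_x^α ∂_y^β g(x,y,z)|² dx dy`. -/
def sliceHSq (m : ℕ) (g : V3 → ℝ) (z : ℝ) : ℝ :=
  ∑ γ ∈ midx2 m, ∫ p : ℝ × ℝ, ((pd 0)^[γ.1] ((pd 1)^[γ.2] g) ![p.1, p.2, z]) ^ 2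

end


lemma contDiff_pd (i : Fin 3) {f : V3 → ℝ} (hf : ContDiff ℝ (⊤ : ℕ∞) f) :
    ContDiff ℝ (⊤ : ℕ∞) (pd i f) := by
  unfold pd
  exact (hf.fderiv_right (m := (⊤ : ℕ∞)) (by norm_cast)).clm_apply contDiff_const

lemma contDiff_pd_iterate (i : Fin 3) (n : ℕ) {f : V3 → ℝ} (hf : ContDiff ℝ (⊤ : ℕ∞) f) :
    ContDiff ℝ (⊤ : ℕ∞) ((pd i)^[n] f) := by
  induction n with
  | zero => exact hf
  | succ n ih => rw [Function.iterate_succ_apply']; exact contDiff_pd i ih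

lemma pd_comm (i j : Fin 3) {f : V3 → ℝ} (hf : ContDiff ℝ (⊤ : ℕ∞) f) :
    pd i (pd j f) = pd j (pd i f) := by
  have hd : Differentiable ℝ (fderiv ℝ f) :=
    (hf.fderiv_right (m := (⊤ : ℕ∞)) (by norm_cast)).differentiable (by simp)
  have key (k : Fin 3) (x v : V3) :
      fderiv ℝ (fun y => fderiv ℝ f y (Pi.single k 1)) x v
        = fderiv ℝ (fderiv ℝ f) x v (Pi.single k 1) := by
    rw [fderiv_clm_apply (hd x) (differentiableAt_const _)]
    simp
  funext x
  have hs : IsSymmSndFDerivAt ℝ f x :=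
    hf.contDiffAt.isSymmSndFDerivAt (by
      rw [minSmoothness_of_isRCLikeNormedField]
      exact WithTop.coe_le_coe.2 (le_top : (2 : ℕ∞) ≤ ⊤))
  unfold pd
  rw [key, key]
  exact hs _ _

lemma pd_comm_iterate (i j : Fin 3) (n : ℕ) {f : V3 → ℝ} (hf : ContDiff ℝ (⊤ : ℕ∞) f) :
    pd i ((pd j)^[n] f) = (pd j)^[n] (pd i f) := by
  induction n with
  | zero => rfl
  | succ n ih =>
    rw [Function.iterate_succ_apply', Function.iterate_succ_apply',
      pd_comm i j (contDiff_pd_iterate j n hf), ih]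

lemma pd_two_horizontal (a b : ℕ) {g : V3 → ℝ} (hg : ContDiff ℝ (⊤ : ℕ∞) g) :
    pd 2 ((pd 0)^[a] ((pd 1)^[b] g)) = (pd 0)^[a] ((pd 1)^[b] (pd 2 g)) := by
  rw [pd_comm_iterate 2 0 a (contDiff_pd_iterate 1 b hg), pd_comm_iterate 2 1 b hg]

lemma sq_le_integral_abs_deriv {u u' : ℝ → ℝ} (hu : ∀ t, HasDerivAt u (u' t) t)
    (h1 : Integrable (fun t => u t ^ 2)) (h2 : Integrable (fun t => u t * u' t)) (z : ℝ) :
    u z ^ 2 ≤ ∫ t, 2 * |u t * u' t| := by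
  have hd : ∀ t, HasDerivAt (fun t => u t ^ 2) (2 * (u t * u' t)) t := fun t =>
    ((hu t).fun_pow 2).congr_deriv (by norm_num; ring)
  have h2' : Integrable (fun t => 2 * (u t * u' t)) := h2.const_mul 2
  have lim := tendsto_zero_of_hasDerivAt_of_integrableOn_Iic (a := z)
    (fun t _ => hd t) h2'.integrableOn h1.integrableOn
  have e := integral_Iic_of_hasDerivAt_of_tendsto' (a := z)
    (fun t _ => hd t) h2'.integrableOn lim
  have habs : Integrable (fun t => 2 * |u t * u' t|) := h2.abs.const_mul 2
  calc u z ^ 2 = ∫ t in Iic z, 2 * (u t * u' t) := by rw [e]; ring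
    _ ≤ ∫ t in Iic z, 2 * |u t * u' t| :=
      integral_mono h2'.integrableOn habs.integrableOn
        (fun t => by have := le_abs_self (u t * u' t); dsimp only; linarith)
    _ ≤ ∫ t, 2 * |u t * u' t| :=
      setIntegral_le_integral habs (Filter.Eventually.of_forall fun t => by positivity)

lemma integral_abs_mul_le_sqrt {f k : V3 → ℝ} (hf : Continuous f) (hk : Continuous k)
    (h1 : Integrable (fun x => f x ^ 2)) (h2 : Integrable (fun x => k x ^ 2)) :
    ∫ x, |f x * k x| ≤ Real.sqrt (∫ x, f x ^ 2) * Real.sqrt (∫ x, k x ^ 2) := by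
  have m1 : MemLp f (ENNReal.ofReal 2) := by
    simpa using (memLp_two_iff_integrable_sq hf.aestronglyMeasurable).2 h1
  have m2 : MemLp k (ENNReal.ofReal 2) := by
    simpa using (memLp_two_iff_integrable_sq hk.aestronglyMeasurable).2 h2
  have := integral_mul_norm_le_Lp_mul_Lq (μ := (volume : Measure V3))
    Real.HolderConjugate.two_two m1 m2
  simpa [Real.sqrt_eq_rpow, abs_mul] using this

/-- The splitting of `ℝ³` into the vertical coordinate and the horizontal plane. -/
def splitEquiv : V3 ≃ᵐ ℝ × (ℝ × ℝ) :=
  (MeasurableEquiv.piFinSuccAbove (fun _ => ℝ) 2).trans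
    ((MeasurableEquiv.refl ℝ).prodCongr MeasurableEquiv.finTwoArrow)

lemma splitEquiv_symm_apply (q : ℝ × (ℝ × ℝ)) : splitEquiv.symm q = ![q.2.1, q.2.2, q.1] := by
  apply splitEquiv.injective
  rw [MeasurableEquiv.apply_symm_apply]
  rfl

lemma measurePreserving_split :
    MeasurePreserving (fun q : ℝ × (ℝ × ℝ) => (![q.2.1, q.2.2, q.1] : V3)) := by
  have h : MeasurePreserving splitEquiv (volume : Measure V3) volume :=
    ((MeasurePreserving.id volume).prod (volume_preserving_finTwoArrow ℝ)).comp
      (volume_preserving_piFinSuccAbove (fun _ => ℝ) 2)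
  have := h.symm
  have e : (⇑splitEquiv.symm) = fun q : ℝ × (ℝ × ℝ) => (![q.2.1, q.2.2, q.1] : V3) :=
    funext splitEquiv_symm_apply
  rwa [e] at this

lemma measurableEmbedding_split :
    MeasurableEmbedding (fun q : ℝ × (ℝ × ℝ) => (![q.2.1, q.2.2, q.1] : V3)) := by
  have := splitEquiv.symm.measurableEmbedding
  have e : (⇑splitEquiv.symm) = fun q : ℝ × (ℝ × ℝ) => (![q.2.1, q.2.2, q.1] : V3) :=
    funext splitEquiv_symm_apply
  rwa [e] at this

lemma hasDerivAt_vertical {h : V3 → ℝ} (hh : ContDiff ℝ (⊤ : ℕ∞) h) (x y t : ℝ) :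
    HasDerivAt (fun t => h ![x, y, t]) (pd 2 h ![x, y, t]) t := by
  have hl : HasDerivAt (fun t : ℝ => (![x, y, t] : V3)) (Pi.single 2 1) t := by
    rw [hasDerivAt_pi]
    intro i
    fin_cases i
    · simpa using hasDerivAt_const t x
    · simpa using hasDerivAt_const t y
    · exact (hasDerivAt_id t).congr_deriv (by simp)
  exact ((hh.differentiable (by simp)) _).hasFDerivAt.comp_hasDerivAt t hl

/-- The case `m = 0` of the estimate, in squared form. No integrability of the slice is needed:
the Bochner integral of a non-integrable slice is `0`. -/
lemma slice_integral_le {h : V3 → ℝ} (hh : ContDiff ℝ (⊤ : ℕ∞) h)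
    (h1 : Integrable (fun x => h x ^ 2)) (h2 : Integrable (fun x => pd 2 h x ^ 2)) (z : ℝ) :
    ∫ p : ℝ × ℝ, h ![p.1, p.2, z] ^ 2
      ≤ 2 * (Real.sqrt (∫ x, h x ^ 2) * Real.sqrt (∫ x, pd 2 h x ^ 2)) := by
  have c1 : Continuous h := hh.continuous
  have c2 : Continuous (pd 2 h) := (contDiff_pd 2 hh).continuous
  have hprod : Integrable (fun x => h x * pd 2 h x) :=
    ((memLp_two_iff_integrable_sq c1.aestronglyMeasurable).2 h1).integrable_mul
      ((memLp_two_iff_integrable_sq c2.aestronglyMeasurable).2 h2)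
  have i1 := (measurePreserving_split.integrable_comp_emb measurableEmbedding_split).2 h1
  have i2 := (measurePreserving_split.integrable_comp_emb measurableEmbedding_split).2 hprod
  have i3 : Integrable (fun q : ℝ × (ℝ × ℝ) =>
      2 * |h ![q.2.1, q.2.2, q.1] * pd 2 h ![q.2.1, q.2.2, q.1]|) := i2.abs.const_mul 2
  have a1 : ∀ᵐ p : ℝ × ℝ, Integrable (fun t : ℝ => h ![p.1, p.2, t] ^ 2) :=
    Integrable.prod_left_ae (μ := (volume : Measure ℝ)) (ν := (volume : Measure (ℝ × ℝ))) i1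
  have a2 : ∀ᵐ p : ℝ × ℝ, Integrable (fun t : ℝ => h ![p.1, p.2, t] * pd 2 h ![p.1, p.2, t]) :=
    Integrable.prod_left_ae (μ := (volume : Measure ℝ)) (ν := (volume : Measure (ℝ × ℝ))) i2
  have i4 : Integrable (fun p : ℝ × ℝ =>
      ∫ t : ℝ, 2 * |h ![p.1, p.2, t] * pd 2 h ![p.1, p.2, t]|) :=
    Integrable.integral_prod_right
      (μ := (volume : Measure ℝ)) (ν := (volume : Measure (ℝ × ℝ))) i3
  calc ∫ p : ℝ × ℝ, h ![p.1, p.2, z] ^ 2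
      ≤ ∫ p : ℝ × ℝ, ∫ t : ℝ, 2 * |h ![p.1, p.2, t] * pd 2 h ![p.1, p.2, t]| := by
        apply integral_mono_of_nonneg (Filter.Eventually.of_forall fun p => sq_nonneg _) i4
        filter_upwards [a1, a2] with p hp1 hp2
        exact sq_le_integral_abs_deriv (hasDerivAt_vertical hh p.1 p.2) hp1 hp2 z
    _ = ∫ q : ℝ × (ℝ × ℝ), 2 * |h ![q.2.1, q.2.2, q.1] * pd 2 h ![q.2.1, q.2.2, q.1]| :=
        (integral_prod_symm (μ := (volume : Measure ℝ)) (ν := (volume : Measure (ℝ × ℝ)))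
          _ i3).symm
    _ = ∫ x : V3, 2 * |h x * pd 2 h x| :=
        measurePreserving_split.integral_comp measurableEmbedding_split
          (fun x => 2 * |h x * pd 2 h x|)
    _ = 2 * ∫ x : V3, |h x * pd 2 h x| := integral_const_mul _ _
    _ ≤ _ := by
        gcongr
        exact integral_abs_mul_le_sqrt c1 c2 h1 h2

/-- The purely horizontal multi-indices contribute at most the full squared `H^m` norm. -/
lemma sum_horizontal_le_HnormSq (m : ℕ) (f : V3 → ℝ) :
    ∑ γ ∈ midx2 m, ∫ x : V3, ((pd 0)^[γ.1] ((pd 1)^[γ.2] f) x) ^ 2 ≤ HnormSq m f := by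
  let e : ℕ × ℕ ↪ ℕ × ℕ × ℕ := ⟨fun γ => (γ.1, γ.2, 0), fun a b hab => by
    simp only [Prod.mk.injEq] at hab; exact Prod.ext hab.1 hab.2.1⟩
  have hsub : (midx2 m).map e ⊆ midx m := by
    intro γ hγ
    obtain ⟨a, ha, rfl⟩ := Finset.mem_map.1 hγ
    change (a.1, a.2, 0) ∈ midx m
    simp only [midx2, midx, Finset.mem_filter, Finset.mem_product, Finset.mem_range] at ha ⊢
    omega
  calc _ = ∑ γ ∈ (midx2 m).map e, ∫ x : V3, (pdM γ f x) ^ 2 := by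
        rw [Finset.sum_map]; rfl
    _ ≤ HnormSq m f := Finset.sum_le_sum_of_subset_of_nonneg hsub
        fun _ _ _ => integral_nonneg fun _ => sq_nonneg _

/-- For every `m ≥ 0` there is `C = C(m)` such that for every smooth
`g : ℝ³ → ℝ` whose partial derivatives of order `≤ m + 1` are square-integrable and
every `z ∈ ℝ`, the slice norm satisfies
`‖g(·,·,z)‖_{H^m(ℝ²)} ≤ C ‖g‖_{H^m(ℝ³)}^{1/2} ‖∂_z g‖_{H^m(ℝ³)}^{1/2}`. -/
theorem slice_norm_anisotropic_bound :
    ∀ m : ℕ, ∃ C : ℝ,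
      ∀ g : V3 → ℝ, ContDiff ℝ (⊤ : ℕ∞) g →
        (∀ γ ∈ midx (m + 1), Integrable (fun x : V3 => (pdM γ g x) ^ 2) volume) →
        ∀ z : ℝ,
          Real.sqrt (sliceHSq m g z)
            ≤ C * Real.sqrt (Hnorm m g) * Real.sqrt (Hnorm m (pd 2 g)) := by
  intro m
  refine ⟨Real.sqrt 2, fun g hg hint z => ?_⟩
  have hA : 0 ≤ Hnorm m g := Real.sqrt_nonneg _
  rw [← Real.sqrt_mul zero_le_two, ← Real.sqrt_mul (by positivity)]
  apply Real.sqrt_le_sqrt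
  have step : ∀ γ ∈ midx2 m,
      ∫ p : ℝ × ℝ, ((pd 0)^[γ.1] ((pd 1)^[γ.2] g) ![p.1, p.2, z]) ^ 2
        ≤ 2 * (Real.sqrt (∫ x : V3, ((pd 0)^[γ.1] ((pd 1)^[γ.2] g) x) ^ 2)
          * Real.sqrt (∫ x : V3, ((pd 0)^[γ.1] ((pd 1)^[γ.2] (pd 2 g)) x) ^ 2)) := by
    intro γ hγ
    have hm0 : (γ.1, γ.2, 0) ∈ midx (m + 1) := by
      simp only [midx2, midx, Finset.mem_filter, Finset.mem_product, Finset.mem_range] at hγ ⊢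
      omega
    have hm1 : (γ.1, γ.2, 1) ∈ midx (m + 1) := by
      simp only [midx2, midx, Finset.mem_filter, Finset.mem_product, Finset.mem_range] at hγ ⊢
      omega
    have hc := pd_two_horizontal γ.1 γ.2 hg
    have := slice_integral_le (contDiff_pd_iterate 0 γ.1 (contDiff_pd_iterate 1 γ.2 hg))
      (hint _ hm0) (by rw [hc]; exact hint _ hm1) z
    rwa [hc] at this
  calc sliceHSq m g z
      ≤ ∑ γ ∈ midx2 m, 2 * (Real.sqrt (∫ x : V3, ((pd 0)^[γ.1] ((pd 1)^[γ.2] g) x) ^ 2)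
          * Real.sqrt (∫ x : V3, ((pd 0)^[γ.1] ((pd 1)^[γ.2] (pd 2 g)) x) ^ 2)) :=
        Finset.sum_le_sum step
    _ = 2 * ∑ γ ∈ midx2 m, (Real.sqrt (∫ x : V3, ((pd 0)^[γ.1] ((pd 1)^[γ.2] g) x) ^ 2)
          * Real.sqrt (∫ x : V3, ((pd 0)^[γ.1] ((pd 1)^[γ.2] (pd 2 g)) x) ^ 2)) := by
        rw [Finset.mul_sum]
    _ ≤ 2 * (Real.sqrt (∑ γ ∈ midx2 m, ∫ x : V3, ((pd 0)^[γ.1] ((pd 1)^[γ.2] g) x) ^ 2)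
          * Real.sqrt (∑ γ ∈ midx2 m,
              ∫ x : V3, ((pd 0)^[γ.1] ((pd 1)^[γ.2] (pd 2 g)) x) ^ 2)) := by
        gcongr
        exact Real.sum_sqrt_mul_sqrt_le _
          (fun _ => integral_nonneg fun _ => sq_nonneg _)
          (fun _ => integral_nonneg fun _ => sq_nonneg _)
    _ ≤ 2 * (Hnorm m g * Hnorm m (pd 2 g)) := by
        unfold Hnorm
        gcongr <;> exact sum_horizontal_le_HnormSq m _
    _ = 2 * Hnorm m g * Hnorm m (pd 2 g) := by ring
end
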